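/- Let N ≥ 0 and for each h ∈ {0, 1, …, N} let H^{(h)}_1, …, H^{(h)}_{m_h} be a nonempty family of pairwise commuting orthogonal projections on a finite-dimensional complex inner product space. Let H = ∑_{h=0}^{N} ∑_{j=1}^{m_h} H^{(h)}_j and m_max = max_{0 ≤ h ≤ N} m_h. Then for every unit vector ψ, 1 − ⟨ψ, Hψ⟩/(N+1) ≤ (1/(N+1)) ∑_{h=0}^{N} ⟨ψ, ∏_{j=1}^{m_h} (I − H^{(h)}_j) ψ⟩ ≤ 1 − ⟨ψ, Hψ⟩/(m_max·(N+1)). -/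

import Mathlib

open Matrix

/-! For commuting projections `p₁, …, pₙ` the product `∏ (1 - pⱼ)` is again a projection. It lies
below each `1 - pⱼ`, so summing over `j` gives `∑ pⱼ ≤ n (1 - ∏ (1 - pⱼ))`; in the other direction,
`1 - ∏ (1 - pⱼ) ≤ ∑ pⱼ` is the union bound. These are operator inequalities, so they survive
summation over the groups and evaluation at any positive functional, in particular at a vector
state. -/

theorem commute_one_sub_one_sub {R : Type*} [NonAssocRing R] {a b : R} (hab : Commute a b) :
    Commute (1 - a) (1 - b) :=
  (Commute.one_left _).sub_left ((Commute.one_right a).sub_right hab)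

theorem isStarProjection_list_prod {R : Type*} [Semiring R] [StarRing R] {l : List R}
    (hproj : ∀ p ∈ l, IsStarProjection p) (hcomm : l.Pairwise Commute) :
    IsStarProjection l.prod := by
  induction l with
  | nil => exact .one R
  | cons p l ih =>
    rw [List.forall_mem_cons] at hproj
    rw [List.pairwise_cons] at hcomm
    rw [List.prod_cons]
    exact hproj.1.mul (ih hproj.2 hcomm.2) (.list_prod_right _ _ hcomm.1)

section NonUnital

variable {R : Type*} [NonUnitalRing R] [StarRing R] [PartialOrder R] [StarOrderedRing R] {p q : R}

theorem mul_le_left_of_isStarProjection (hp : IsStarProjection p) (hq : IsStarProjection q)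
    (hpq : Commute p q) : p * q ≤ p :=
  (hp.mul hq hpq).le_of_mul_eq_right hp (by rw [← mul_assoc, hp.isIdempotentElem.eq])

theorem mul_le_right_of_isStarProjection (hp : IsStarProjection p) (hq : IsStarProjection q)
    (hpq : Commute p q) : p * q ≤ q :=
  (hp.mul hq hpq).le_of_mul_eq_left hq (by rw [mul_assoc, hq.isIdempotentElem.eq])

end NonUnital

section Unital

variable {R : Type*} [Ring R] [StarRing R]

theorem isStarProjection_of_mem_map_one_sub {l : List R} (hproj : ∀ p ∈ l, IsStarProjection p) :
    ∀ q ∈ l.map (1 - ·), IsStarProjection q :=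
  List.forall_mem_map.2 fun p hp => (hproj p hp).one_sub

theorem isStarProjection_list_prod_one_sub {l : List R} (hproj : ∀ p ∈ l, IsStarProjection p)
    (hcomm : l.Pairwise Commute) : IsStarProjection (l.map (1 - ·)).prod :=
  isStarProjection_list_prod (isStarProjection_of_mem_map_one_sub hproj)
    (hcomm.map _ fun _ _ => commute_one_sub_one_sub)

variable [PartialOrder R] [StarOrderedRing R]

theorem list_prod_le_of_isStarProjection {l : List R} (hproj : ∀ p ∈ l, IsStarProjection p)
    (hcomm : l.Pairwise Commute) {p : R} (hp : p ∈ l) : l.prod ≤ p := by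
  induction l with
  | nil => exact absurd hp List.not_mem_nil
  | cons a l ih =>
    rw [List.forall_mem_cons] at hproj
    rw [List.pairwise_cons] at hcomm
    have hprod : IsStarProjection l.prod := isStarProjection_list_prod hproj.2 hcomm.2
    have ha : Commute a l.prod := Commute.list_prod_right _ _ hcomm.1
    rw [List.prod_cons]
    rcases List.mem_cons.1 hp with rfl | hp
    · exact mul_le_left_of_isStarProjection hproj.1 hprod ha
    · exact (mul_le_right_of_isStarProjection hproj.1 hprod ha).trans (ih hproj.2 hcomm.2 hp)

theorem one_sub_list_sum_le_prod_one_sub {l : List R} (hproj : ∀ p ∈ l, IsStarProjection p)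
    (hcomm : l.Pairwise Commute) : 1 - l.sum ≤ (l.map (1 - ·)).prod := by
  induction l with
  | nil => simp
  | cons p l ih =>
    rw [List.forall_mem_cons] at hproj
    rw [List.pairwise_cons] at hcomm
    rw [List.sum_cons, List.map_cons, List.prod_cons]
    set Q := (l.map (1 - ·)).prod
    have hQ : IsStarProjection Q := isStarProjection_list_prod_one_sub hproj.2 hcomm.2
    have hpQ : Commute p Q := Commute.list_prod_right _ _ <|
      List.forall_mem_map.2 fun q hq => (Commute.one_right p).sub_right (hcomm.1 q hq)
    calc 1 - (p + l.sum) = (1 - l.sum) - p := by abel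
      _ ≤ Q - p * Q :=
        sub_le_sub (ih hproj.2 hcomm.2) (mul_le_left_of_isStarProjection hproj.1 hQ hpQ)
      _ = (1 - p) * Q := (one_sub_mul p Q).symm

theorem list_sum_le_length_nsmul_one_sub_prod {l : List R}
    (hproj : ∀ p ∈ l, IsStarProjection p) (hcomm : l.Pairwise Commute) :
    l.sum ≤ l.length • (1 - (l.map (1 - ·)).prod) := by
  refine List.sum_le_card_nsmul _ _ fun p hp => le_sub_comm.1 ?_
  exact list_prod_le_of_isStarProjection (isStarProjection_of_mem_map_one_sub hproj)
    (hcomm.map _ fun _ _ => commute_one_sub_one_sub) (List.mem_map_of_mem hp)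

variable {ι : Type*} [Fintype ι] {l : ι → List R}

theorem card_nsmul_one_sub_sum_le_sum_prod (hproj : ∀ h, ∀ p ∈ l h, IsStarProjection p)
    (hcomm : ∀ h, (l h).Pairwise Commute) :
    Fintype.card ι • (1 : R) - ∑ h, (l h).sum ≤ ∑ h, ((l h).map (1 - ·)).prod := by
  rw [← Finset.card_univ, ← Finset.sum_const, ← Finset.sum_sub_distrib]
  exact Finset.sum_le_sum fun h _ => one_sub_list_sum_le_prod_one_sub (hproj h) (hcomm h)

theorem sum_le_sup_length_nsmul_card_sub_sum_prod (hproj : ∀ h, ∀ p ∈ l h, IsStarProjection p)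
    (hcomm : ∀ h, (l h).Pairwise Commute) :
    ∑ h, (l h).sum ≤ (Finset.univ.sup fun h => (l h).length) •
      (Fintype.card ι • (1 : R) - ∑ h, ((l h).map (1 - ·)).prod) := by
  rw [← Finset.card_univ, ← Finset.sum_const, ← Finset.sum_sub_distrib, Finset.smul_sum]
  refine Finset.sum_le_sum fun h _ => ?_
  refine (list_sum_le_length_nsmul_one_sub_prod (hproj h) (hcomm h)).trans ?_
  exact nsmul_le_nsmul_left
    (isStarProjection_list_prod_one_sub (hproj h) (hcomm h)).one_sub.nonneg
    (Finset.le_sup (f := fun h => (l h).length) (Finset.mem_univ h))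

theorem stmt_13_general {K : Type*} [Field K] [LinearOrder K] [IsStrictOrderedRing K]
    (hproj : ∀ h, ∀ p ∈ l h, IsStarProjection p) (hcomm : ∀ h, (l h).Pairwise Commute)
    (hlength : 0 < Finset.univ.sup fun h => (l h).length) (φ : R →+o K) :
    φ 1 - φ (∑ h, (l h).sum) / Fintype.card ι ≤
        (1 / (Fintype.card ι : K)) * ∑ h, φ ((l h).map (1 - ·)).prod ∧
      (1 / (Fintype.card ι : K)) * ∑ h, φ ((l h).map (1 - ·)).prod ≤
        φ 1 - φ (∑ h, (l h).sum) /
          (((Finset.univ.sup fun h => (l h).length : ℕ) : K) * Fintype.card ι) := by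
  obtain ⟨h₀, -, -⟩ := Finset.lt_sup_iff.1 hlength
  have hcard : (0 : K) < Fintype.card ι := Nat.cast_pos.2 (Fintype.card_pos_iff.2 ⟨h₀⟩)
  have hsup : (0 : K) < (Finset.univ.sup fun h => (l h).length : ℕ) := Nat.cast_pos.2 hlength
  have hlower := OrderHomClass.mono φ (card_nsmul_one_sub_sum_le_sum_prod hproj hcomm)
  have hupper := OrderHomClass.mono φ (sum_le_sup_length_nsmul_card_sub_sum_prod hproj hcomm)
  rw [map_sub, map_nsmul, nsmul_eq_mul, map_sum φ (fun h => ((l h).map (1 - ·)).prod)] at hlower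
  rw [map_nsmul, map_sub, map_nsmul, nsmul_eq_mul, nsmul_eq_mul,
    map_sum φ (fun h => ((l h).map (1 - ·)).prod)] at hupper
  rw [one_div_mul_eq_div, sub_div' hcard.ne', ← div_div, sub_div' hcard.ne']
  constructor <;> gcongr
  · rwa [mul_comm]
  · rwa [le_sub_comm, div_le_iff₀' hsup, mul_comm (φ 1)]

end Unital

open scoped MatrixOrder in
/-- The functional `A ↦ re ⟨ψ, A ψ⟩`, bundled as an additive map that is monotone for the Loewner
order; it is the vector state of `ψ` when `ψ` is a unit vector. -/
noncomputable def reQuadraticForm {𝕜 I : Type*} [RCLike 𝕜] [Fintype I] (ψ : I → 𝕜) :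
    Matrix I I 𝕜 →+o ℝ where
  toFun A := RCLike.re (star ψ ⬝ᵥ (A *ᵥ ψ))
  map_zero' := by simp
  map_add' A B := by simp [add_mulVec, dotProduct_add]
  monotone' A B hAB := by
    have hnonneg := (Matrix.le_iff.1 hAB).re_dotProduct_nonneg ψ
    rwa [sub_mulVec, dotProduct_sub, map_sub, sub_nonneg] at hnonneg

theorem reQuadraticForm_apply {𝕜 I : Type*} [RCLike 𝕜] [Fintype I] (ψ : I → 𝕜)
    (A : Matrix I I 𝕜) : reQuadraticForm ψ A = RCLike.re (star ψ ⬝ᵥ (A *ᵥ ψ)) :=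
  rfl

/-- for `N + 1` nonempty groups of pairwise commuting orthogonal
projections `H^{(h)}_j` (`h = 0, …, N`, `j = 1, …, m_h`), with
`H = ∑_h ∑_j H^{(h)}_j` and `m_max = max_h m_h`, every unit vector `ψ` satisfies
`1 − ⟨ψ,Hψ⟩/(N+1) ≤ (1/(N+1)) ∑_h ⟨ψ, ∏_j (I − H^{(h)}_j) ψ⟩
  ≤ 1 − ⟨ψ,Hψ⟩/(m_max·(N+1))`. -/
theorem stmt_13 {I : Type*} [Fintype I] [DecidableEq I] (N : ℕ)
    (m : Fin (N + 1) → ℕ) (hm : ∀ h, 1 ≤ m h)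
    (T : (h : Fin (N + 1)) → Fin (m h) → Matrix I I ℂ)
    (hherm : ∀ h j, (T h j).IsHermitian)
    (hidem : ∀ h j, T h j * T h j = T h j)
    (hcomm : ∀ h j j', Commute (T h j) (T h j'))
    (ψ : I → ℂ) (hψ : star ψ ⬝ᵥ ψ = 1) :
    1 - (star ψ ⬝ᵥ ((∑ h, ∑ j, T h j) *ᵥ ψ)).re / (N + 1) ≤
        (1 / (N + 1 : ℝ)) *
          ∑ h, (star ψ ⬝ᵥ ((List.ofFn fun j => (1 : Matrix I I ℂ) - T h j).prod *ᵥ ψ)).re ∧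
      (1 / (N + 1 : ℝ)) *
          ∑ h, (star ψ ⬝ᵥ ((List.ofFn fun j => (1 : Matrix I I ℂ) - T h j).prod *ᵥ ψ)).re ≤
        1 - (star ψ ⬝ᵥ ((∑ h, ∑ j, T h j) *ᵥ ψ)).re /
          (((Finset.univ.sup m : ℕ) : ℝ) * (N + 1)) := by
  open scoped MatrixOrder in
  have hbounds := stmt_13_general (l := fun h => List.ofFn (T h))
    (fun h => List.forall_mem_ofFn_iff.2 fun j => ⟨hidem h j, hherm h j⟩)
    (fun h => List.pairwise_ofFn.2 fun i j _ => hcomm h i j)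
    (by simpa using ⟨0, hm 0⟩) (reQuadraticForm ψ)
  simpa only [reQuadraticForm_apply, one_mulVec, hψ, RCLike.one_re, RCLike.re_eq_complex_re,
    List.sum_ofFn, List.map_ofFn, List.length_ofFn, Function.comp_def, Fintype.card_fin,
    Nat.cast_add_one] using hbounds
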